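/- arXiv:1301.5799 — 2 statements merged into one kernel-verified Lean document; each statement's English description precedes it below -/
import Mathlib

section
/- Let K be a compact Hausdorff space and F ⊂ K a closed metrizable subset. Let L = (K \ F) ∪ {F} be endowed with the quotient topology induced by the map Q : K → L defined by Q(x) = x for x ∈ K \ F and Q(x) = F for x ∈ F (i.e., L is the quotient of K obtained by collapsing F to a single point). If D is induced by an r-skeleton in L and Q⁻¹(D) is dense in K, then Q⁻¹(D) is induced by an r-skeleton in K. -/
/-!
Since `F` is compact metrizable, it embeds into `ℕ → ℝ`, and by Tietze's theorem this embedding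
extends to a continuous `h : K → ℕ → ℝ`. Hence `x ↦ (Q x, h x)` embeds `K` into `L × (ℕ → ℝ)`,
where `L = K / F` is Hausdorff. If `(r s)` is a skeleton of `L` inducing `D`, then `(r s × id)` is
a skeleton of this product inducing `D × (ℕ → ℝ)`, a set whose trace on `K` is `Q ⁻¹' D`.

It remains to restrict a skeleton of a Hausdorff space `X` inducing `D` to a compact set `C ⊆ X` in
which `C ∩ D` is dense. The retractions mapping `C` into itself do restrict to `C`, and their
indices are closed under suprema of increasing sequences, so the point is that these indices are
cofinal. Given `s n`, the metrizability of `r (s n) [X]` yields a countable `A ⊆ C ∩ D` with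
`r (s n) [C] = r (s n) [closure A]`, and some `s (n + 1) ≥ s n` has `A` in the range of its
retraction. For `t = sup s n` every `r (s n)` maps `C` onto the image of the compact set
`C ∩ r t [X]`; hence so does `r t`, which fixes that set pointwise, and `r t [C] ⊆ C`.
-/

open Filter Topology TopologicalSpace Set

universe u v

/-- A retractional skeleton in a topological space `K`: a family `r s : C(K, K)` of continuous
retractions indexed by an up-directed (nonempty) partially ordered set `Γ` such that
(i) each `r s` has metrizable range and the net `(r s x)` converges to `x`;
(ii) `s ≤ t` implies `r s ∘ r t = r t ∘ r s = r s`;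
(iii) each strictly increasing sequence has a supremum `t` and `r t x = lim_n r (f n) x`. -/
structure RetractionalSkeleton (K : Type u) [TopologicalSpace K] : Type (u + 1) where
  Γ : Type u
  [po : PartialOrder Γ]
  [ne : Nonempty Γ]
  directed : ∀ s t : Γ, ∃ w, s ≤ w ∧ t ≤ w
  r : Γ → C(K, K)
  isRetraction : ∀ s, ∀ x : K, r s (r s x) = r s x
  metrizable : ∀ s, MetrizableSpace ↥(Set.range (r s))
  tendsto_id : ∀ x : K, Tendsto (fun s => r s x) atTop (𝓝 x)
  comp_eq_of_le : ∀ s t : Γ, s ≤ t → ∀ x : K, r s (r t x) = r s x ∧ r t (r s x) = r s x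
  sup_seq : ∀ f : ℕ → Γ, StrictMono f → ∃ t : Γ, IsLUB (Set.range f) t ∧
    ∀ x : K, Tendsto (fun n => r (f n) x) atTop (𝓝 (r t x))

/-- The set `D(𝔰) = ⋃ s, r s [K]` induced by a retractional skeleton. -/
def RetractionalSkeleton.inducedSet {K : Type u} [TopologicalSpace K]
    (𝔰 : RetractionalSkeleton K) : Set K := ⋃ s, Set.range (𝔰.r s)

/-- `D` is induced by an r-skeleton in `K`. -/
def IsInducedByRSkeleton {K : Type u} [TopologicalSpace K] (D : Set K) : Prop :=
  ∃ 𝔰 : RetractionalSkeleton K, 𝔰.inducedSet = D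

/-- `K` has a retractional skeleton. -/
def HasRetractionalSkeleton (K : Type u) [TopologicalSpace K] : Prop :=
  Nonempty (RetractionalSkeleton K)

/-- The equivalence relation on `K` identifying all points of `F` (and nothing else). -/
def collapseSetoid {K : Type u} (F : Set K) : Setoid K where
  r x y := x = y ∨ (x ∈ F ∧ y ∈ F)
  iseqv := by
    constructor
    · exact fun x => Or.inl rfl
    · rintro x y (rfl | ⟨h1, h2⟩)
      · exact Or.inl rfl
      · exact Or.inr ⟨h2, h1⟩
    · rintro x y z (rfl | ⟨h1, h2⟩) (rfl | ⟨h3, h4⟩)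
      · exact Or.inl rfl
      · exact Or.inr ⟨h3, h4⟩
      · exact Or.inr ⟨h1, h2⟩
      · exact Or.inr ⟨h1, h4⟩

section Topology

variable {X Y : Type*} [TopologicalSpace X] [TopologicalSpace Y]

theorem exists_countable_image_closure_subset [MetrizableSpace Y] {S : Set X}
    (hS : IsCompact (closure S)) {g : X → Y} (hg : Continuous g) :
    ∃ A ⊆ S, A.Countable ∧ g '' closure S ⊆ g '' closure A := by
  have hsep : IsSeparable (g '' S) := (hS.image hg).isSeparable.mono (image_mono subset_closure)
  obtain ⟨T, hTS, hTc, hST⟩ := hsep.exists_countable_dense_subset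
  obtain ⟨A, hAS, hinj, rfl⟩ := SurjOn.exists_subset_injOn_image_eq hTS
  refine ⟨A, hAS, countable_of_injective_of_countable_image hinj hTc, ?_⟩
  have hclosed : IsClosed (g '' closure A) :=
    ((hS.of_isClosed_subset isClosed_closure (closure_mono hAS)).image hg).isClosed
  calc g '' closure S ⊆ closure (g '' S) := image_closure_subset_closure_image hg
    _ ⊆ closure (g '' A) := closure_minimal hST isClosed_closure
    _ ⊆ g '' closure A := closure_minimal (image_mono subset_closure) hclosed

theorem exists_continuousMap_injOn_of_isClosed [NormalSpace X] {F : Set X} (hF : IsClosed F)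
    [T3Space F] [SecondCountableTopology F] : ∃ h : C(X, ℕ → ℝ), InjOn h F := by
  obtain ⟨g, hg⟩ := exists_embedding_l_infty F
  let coords : C(F, ℕ → ℝ) := ⟨fun x n => g x n, by have := hg.continuous; fun_prop⟩
  obtain ⟨h, hh⟩ := coords.exists_restrict_eq hF
  have hrestrict (x : F) : h x = coords x := DFunLike.congr_fun hh x
  refine ⟨h, fun x hx y hy hxy => congrArg Subtype.val (a₁ := ⟨x, hx⟩) (a₂ := ⟨y, hy⟩) ?_⟩
  rw [hrestrict ⟨x, hx⟩, hrestrict ⟨y, hy⟩] at hxy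
  exact hg.injective (BoundedContinuousFunction.ext (congrFun hxy))

/-- The continuous self-map of `X` obtained from a self-map `f` of `Y` by identifying `X` with its
image under an embedding `e : X → Y`, when `f` maps this image into itself. -/
noncomputable def pullbackSelfMap {e : X → Y} (he : IsEmbedding e) (f : C(Y, Y))
    (hf : MapsTo f (range e) (range e)) : C(X, X) where
  toFun x := he.toHomeomorph.symm ⟨f (e x), hf (mem_range_self x)⟩
  continuous_toFun := he.toHomeomorph.symm.continuous.comp
    ((f.continuous.comp he.continuous).subtype_mk _)

theorem apply_pullbackSelfMap {e : X → Y} (he : IsEmbedding e) (f : C(Y, Y))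
    (hf : MapsTo f (range e) (range e)) (x : X) : e (pullbackSelfMap he f hf x) = f (e x) :=
  congrArg Subtype.val (he.toHomeomorph.apply_symm_apply ⟨f (e x), hf (mem_range_self x)⟩)

end Topology

namespace RetractionalSkeleton

attribute [local instance] RetractionalSkeleton.po RetractionalSkeleton.ne

section Subspace

variable {X : Type u} [TopologicalSpace X] (𝔰 : RetractionalSkeleton X)

theorem mem_range_iff {s : 𝔰.Γ} {x : X} : x ∈ range (𝔰.r s) ↔ 𝔰.r s x = x :=
  ⟨by rintro ⟨y, rfl⟩; exact 𝔰.isRetraction s y, fun h => ⟨x, h⟩⟩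

theorem isClosed_range [T2Space X] (s : 𝔰.Γ) : IsClosed (range (𝔰.r s)) := by
  have hfixed : range (𝔰.r s) = {x | 𝔰.r s x = x} := ext fun _ => 𝔰.mem_range_iff
  rw [hfixed]
  exact isClosed_eq (𝔰.r s).continuous continuous_id

theorem range_subset_range_of_le {s t : 𝔰.Γ} (h : s ≤ t) : range (𝔰.r s) ⊆ range (𝔰.r t) := by
  rintro _ ⟨x, rfl⟩
  exact ⟨𝔰.r s x, (𝔰.comp_eq_of_le s t h x).2⟩

theorem apply_eq_apply_of_le {s t : 𝔰.Γ} (h : s ≤ t) {x y : X} (hxy : 𝔰.r t x = 𝔰.r t y) :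
    𝔰.r s x = 𝔰.r s y := by
  rw [← (𝔰.comp_eq_of_le s t h x).1, hxy, (𝔰.comp_eq_of_le s t h y).1]

theorem mem_inducedSet {x : X} : x ∈ 𝔰.inducedSet ↔ ∃ s, 𝔰.r s x = x := by
  simp only [inducedSet, mem_iUnion, mem_range_iff]

theorem exists_isLUB_tendsto_subseq {f : ℕ → 𝔰.Γ} (hf : Monotone f) :
    ∃ t, IsLUB (range f) t ∧ ∃ φ : ℕ → ℕ,
      ∀ x, Tendsto (fun n => 𝔰.r (f (φ n)) x) atTop (𝓝 (𝔰.r t x)) := by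
  obtain ⟨φ, hφ⟩ := exists_increasing_or_nonincreasing_subseq (· < ·) f
  suffices ∃ t, IsLUB (range (f ∘ φ)) t ∧
      ∀ x, Tendsto (fun n => 𝔰.r (f (φ n)) x) atTop (𝓝 (𝔰.r t x)) by
    obtain ⟨t, ht, hlim⟩ := this
    rw [IsLUB, hf.upperBounds_range_comp_tendsto_atTop φ.strictMono.tendsto_atTop] at ht
    exact ⟨t, ht, φ, hlim⟩
  rcases hφ with hstrict | hnlt
  · exact 𝔰.sup_seq (f ∘ φ) fun m n h => hstrict m n h
  · have hconst (n : ℕ) : f (φ n) = f (φ 0) := by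
      rcases n.eq_zero_or_pos with rfl | hn
      · rfl
      · exact ((hf (φ.monotone hn.le)).eq_of_not_lt (hnlt 0 n hn)).symm
    refine ⟨f (φ 0), ?_, fun x => ?_⟩
    · rw [show f ∘ φ = fun _ => f (φ 0) from funext hconst, range_const]
      exact isLUB_singleton
    · simpa only [hconst] using tendsto_const_nhds

theorem tendsto_of_isLUB {f : ℕ → 𝔰.Γ} (hf : Monotone f) {t : 𝔰.Γ} (ht : IsLUB (range f) t)
    (x : X) : Tendsto (fun n => 𝔰.r (f n) x) atTop (𝓝 (𝔰.r t x)) := by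
  refine tendsto_of_subseq_tendsto fun ns hns => ?_
  obtain ⟨ψ, -, hmono⟩ := strictMono_subseq_of_tendsto_atTop hns
  obtain ⟨t', ht', φ, hlim⟩ := 𝔰.exists_isLUB_tendsto_subseq (hf.comp hmono.monotone)
  rw [IsLUB, hf.upperBounds_range_comp_tendsto_atTop hmono.tendsto_atTop] at ht'
  obtain rfl : t' = t := ht'.unique ht
  exact ⟨ψ ∘ φ, hlim x⟩

theorem bddAbove_of_countable {S : Set 𝔰.Γ} (hS : S.Countable) : BddAbove S := by
  rcases S.eq_empty_or_nonempty with rfl | hne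
  · exact bddAbove_empty
  obtain ⟨v, rfl⟩ := hS.exists_eq_range hne
  choose ub hleft hright using 𝔰.directed
  let f (n : ℕ) : 𝔰.Γ := Nat.rec (v 0) (fun k s => ub s (v k)) n
  have hf : Monotone f := monotone_nat_of_le_succ fun n => hleft (f n) (v n)
  obtain ⟨t, ht, -⟩ := 𝔰.exists_isLUB_tendsto_subseq hf
  refine ⟨t, ?_⟩
  rintro _ ⟨n, rfl⟩
  exact (hright (f n) (v n)).trans (ht.1 ⟨n + 1, rfl⟩)

theorem exists_ge_subset_range (s : 𝔰.Γ) {A : Set X} (hA : A.Countable)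
    (hAD : A ⊆ 𝔰.inducedSet) : ∃ t, s ≤ t ∧ A ⊆ range (𝔰.r t) := by
  choose v hv using fun a : A => mem_iUnion.1 (hAD a.2)
  have := hA.to_subtype
  obtain ⟨t, ht⟩ := 𝔰.bddAbove_of_countable ((countable_range v).insert s)
  exact ⟨t, ht (mem_insert s _), fun a ha =>
    𝔰.range_subset_range_of_le (ht (mem_insert_of_mem s ⟨⟨a, ha⟩, rfl⟩)) (hv ⟨a, ha⟩)⟩

section Invariant

variable [T2Space X] {C : Set X}

theorem exists_ge_image_subset_image_inter_range (hC : IsCompact C)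
    (hd : C ⊆ closure (C ∩ 𝔰.inducedSet)) (s : 𝔰.Γ) :
    ∃ t, s ≤ t ∧ 𝔰.r s '' C ⊆ 𝔰.r s '' (C ∩ range (𝔰.r t)) := by
  have := 𝔰.metrizable s
  have hS : IsCompact (closure (C ∩ 𝔰.inducedSet)) := hC.closure_of_subset inter_subset_left
  obtain ⟨A, hAS, hAc, hA⟩ := exists_countable_image_closure_subset hS
    (𝔰.r s).continuous.rangeFactorization
  obtain ⟨t, hst, hAt⟩ := 𝔰.exists_ge_subset_range s hAc (hAS.trans inter_subset_right)
  have hclosure : closure A ⊆ C ∩ range (𝔰.r t) :=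
    closure_minimal (subset_inter (hAS.trans inter_subset_left) hAt)
      (hC.isClosed.inter (𝔰.isClosed_range t))
  refine ⟨t, hst, ?_⟩
  rintro _ ⟨x, hx, rfl⟩
  obtain ⟨y, hy, hyx⟩ := hA (mem_image_of_mem _ (hd hx))
  exact ⟨y, hclosure hy, congrArg Subtype.val hyx⟩

theorem image_subset_image_of_isLUB {f : ℕ → 𝔰.Γ} (hf : Monotone f) {t : 𝔰.Γ}
    (ht : IsLUB (range f) t) {B : Set X} (hB : IsCompact B)
    (hCB : ∀ n, 𝔰.r (f n) '' C ⊆ 𝔰.r (f n) '' B) : 𝔰.r t '' C ⊆ 𝔰.r t '' B := by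
  rintro _ ⟨x, hx, rfl⟩
  let fiber (n : ℕ) : Set X := {y | 𝔰.r (f n) y = 𝔰.r (f n) x}
  have hclosed (n : ℕ) : IsClosed (fiber n) :=
    isClosed_eq (𝔰.r (f n)).continuous continuous_const
  obtain ⟨y, hy⟩ : (⋂ n, B ∩ fiber n).Nonempty :=
    IsCompact.nonempty_iInter_of_sequence_nonempty_isCompact_isClosed _
      (fun n => inter_subset_inter_right B fun _ => 𝔰.apply_eq_apply_of_le (hf n.le_succ))
      (fun n => hCB n (mem_image_of_mem _ hx)) (hB.inter_right (hclosed 0))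
      (fun n => hB.isClosed.inter (hclosed n))
  have hyB (n : ℕ) : y ∈ B ∩ fiber n := mem_iInter.1 hy n
  refine ⟨y, (hyB 0).1, tendsto_nhds_unique (𝔰.tendsto_of_isLUB hf ht y) ?_⟩
  exact (𝔰.tendsto_of_isLUB hf ht x).congr fun n => (hyB n).2.symm

theorem exists_ge_mapsTo (hC : IsCompact C) (hd : C ⊆ closure (C ∩ 𝔰.inducedSet)) (s : 𝔰.Γ) :
    ∃ t, s ≤ t ∧ MapsTo (𝔰.r t) C C := by
  choose next hle himage using 𝔰.exists_ge_image_subset_image_inter_range hC hd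
  let f (n : ℕ) : 𝔰.Γ := next^[n] s
  have hf : Monotone f := fun _ _ h => Function.monotone_iterate_of_id_le hle h s
  obtain ⟨t, ht, -⟩ := 𝔰.exists_isLUB_tendsto_subseq hf
  have hnext (n : ℕ) : next (f n) ≤ t :=
    ht.1 ⟨n + 1, Function.iterate_succ_apply' next n s⟩
  have hfixed : 𝔰.r t '' C ⊆ 𝔰.r t '' (C ∩ range (𝔰.r t)) :=
    𝔰.image_subset_image_of_isLUB hf ht (hC.inter_right (𝔰.isClosed_range t)) fun n =>
      (himage (f n)).trans
        (image_mono (inter_subset_inter_right C (𝔰.range_subset_range_of_le (hnext n))))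
  refine ⟨t, ht.1 ⟨0, rfl⟩, fun x hx => ?_⟩
  obtain ⟨y, ⟨hyC, hyt⟩, hyx⟩ := hfixed (mem_image_of_mem _ hx)
  rwa [← hyx, 𝔰.mem_range_iff.1 hyt]

end Invariant

section Comap

variable {K : Type u} [TopologicalSpace K] {e : K → X}

/-- The restriction of a skeleton of `X` to a closed subspace, given as the image of a closed
embedding `e`. It consists of the retractions that map this image into itself, whose indices are
required to be cofinal. -/
noncomputable def comap (he : IsClosedEmbedding e)
    (hcof : ∀ s, ∃ t, s ≤ t ∧ MapsTo (𝔰.r t) (range e) (range e)) : RetractionalSkeleton K where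
  Γ := {s : 𝔰.Γ // MapsTo (𝔰.r s) (range e) (range e)}
  ne := let ⟨t, _, ht⟩ := hcof (Classical.arbitrary _); ⟨t, ht⟩
  directed s t := by
    obtain ⟨w, hsw, htw⟩ := 𝔰.directed s.1 t.1
    obtain ⟨v, hwv, hv⟩ := hcof w
    exact ⟨⟨v, hv⟩, hsw.trans hwv, htw.trans hwv⟩
  r s := pullbackSelfMap he.isEmbedding (𝔰.r s.1) s.2
  isRetraction s x := he.injective (by simp only [apply_pullbackSelfMap, 𝔰.isRetraction])
  metrizable s := by
    have := 𝔰.metrizable s.1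
    have hmaps : MapsTo e (range (pullbackSelfMap he.isEmbedding (𝔰.r s.1) s.2))
        (range (𝔰.r s.1)) := by
      rintro _ ⟨x, rfl⟩
      exact ⟨e x, (apply_pullbackSelfMap ..).symm⟩
    exact (he.isEmbedding.restrict hmaps).metrizableSpace
  tendsto_id x := by
    have hval : Tendsto (Subtype.val : {s : 𝔰.Γ // MapsTo (𝔰.r s) (range e) (range e)} → 𝔰.Γ)
        atTop atTop :=
      (Subtype.mono_coe _).tendsto_atTop_atTop fun s =>
        let ⟨t, hst, ht⟩ := hcof s
        ⟨⟨t, ht⟩, hst⟩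
    simpa only [he.isEmbedding.tendsto_nhds_iff, Function.comp_def, apply_pullbackSelfMap] using
      (𝔰.tendsto_id (e x)).comp hval
  comp_eq_of_le s t hst x := by
    have h := 𝔰.comp_eq_of_le s.1 t.1 hst (e x)
    constructor <;> apply he.injective <;> simp only [apply_pullbackSelfMap, h]
  sup_seq f hf := by
    obtain ⟨t, ht, hlim⟩ := 𝔰.sup_seq (fun n => (f n).1) fun _ _ h => hf h
    have hmaps : MapsTo (𝔰.r t) (range e) (range e) := fun y hy =>
      he.isClosed_range.mem_of_tendsto (hlim y) (Eventually.of_forall fun n => (f n).2 hy)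
    refine ⟨⟨t, hmaps⟩, ⟨?_, fun b hb => ht.2 ?_⟩, fun x => ?_⟩
    · exact forall_mem_range.2 fun n => ht.1 ⟨n, rfl⟩
    · exact forall_mem_range.2 fun n => hb ⟨n, rfl⟩
    · simpa only [he.isEmbedding.tendsto_nhds_iff, Function.comp_def, apply_pullbackSelfMap] using
        hlim (e x)

theorem inducedSet_comap (he : IsClosedEmbedding e)
    (hcof : ∀ s, ∃ t, s ≤ t ∧ MapsTo (𝔰.r t) (range e) (range e)) :
    (𝔰.comap he hcof).inducedSet = e ⁻¹' 𝔰.inducedSet := by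
  ext x
  have hfixed (s : (𝔰.comap he hcof).Γ) : (𝔰.comap he hcof).r s x = x ↔ 𝔰.r s.1 (e x) = e x := by
    rw [← he.injective.eq_iff]
    exact Eq.congr_left (apply_pullbackSelfMap he.isEmbedding (𝔰.r s.1) s.2 x)
  rw [mem_preimage, mem_inducedSet, mem_inducedSet]
  constructor
  · rintro ⟨s, hs⟩
    exact ⟨s.1, (hfixed s).1 hs⟩
  · rintro ⟨s, hs⟩
    obtain ⟨t, hst, ht⟩ := hcof s
    have hxt : e x ∈ range (𝔰.r t) := 𝔰.range_subset_range_of_le hst (𝔰.mem_range_iff.2 hs)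
    exact ⟨⟨t, ht⟩, (hfixed ⟨t, ht⟩).2 (𝔰.mem_range_iff.1 hxt)⟩

end Comap

end Subspace

section Prod

variable {X : Type (max u v)} [TopologicalSpace X] (𝔰 : RetractionalSkeleton X)
  (Z : Type v) [TopologicalSpace Z] [MetrizableSpace Z]

/-- The skeleton `(r s × id)` in the product with a metrizable space. -/
def prodId : RetractionalSkeleton (X × Z) where
  Γ := 𝔰.Γ
  directed := 𝔰.directed
  r s := (𝔰.r s).prodMap (ContinuousMap.id Z)
  isRetraction s x := Prod.ext (𝔰.isRetraction s x.1) rfl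
  metrizable s := by
    have := 𝔰.metrizable s
    have hrange : range ((𝔰.r s).prodMap (ContinuousMap.id Z)) = range (𝔰.r s) ×ˢ range id :=
      range_prodMap
    rw [hrange]
    exact (Homeomorph.Set.prod _ _).isEmbedding.metrizableSpace
  tendsto_id x := (𝔰.tendsto_id x.1).prodMk_nhds tendsto_const_nhds
  comp_eq_of_le s t h x :=
    ⟨Prod.ext (𝔰.comp_eq_of_le s t h x.1).1 rfl, Prod.ext (𝔰.comp_eq_of_le s t h x.1).2 rfl⟩
  sup_seq f hf := by
    obtain ⟨t, ht, hlim⟩ := 𝔰.sup_seq f hf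
    exact ⟨t, ht, fun x => (hlim x.1).prodMk_nhds tendsto_const_nhds⟩

theorem inducedSet_prodId : (𝔰.prodId Z).inducedSet = Prod.fst ⁻¹' 𝔰.inducedSet := by
  ext x
  rw [mem_preimage, mem_inducedSet, mem_inducedSet]
  exact exists_congr fun s => ⟨fun h => congrArg Prod.fst h, fun h => Prod.ext h rfl⟩

end Prod

end RetractionalSkeleton

namespace IsInducedByRSkeleton

theorem preimage_of_injective {K X : Type u} [TopologicalSpace K] [CompactSpace K]
    [TopologicalSpace X] [T2Space X] {D : Set X} (hD : IsInducedByRSkeleton D) {e : K → X}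
    (he : Continuous e) (hinj : Function.Injective e) (hdense : Dense (e ⁻¹' D)) :
    IsInducedByRSkeleton (e ⁻¹' D) := by
  obtain ⟨𝔰, rfl⟩ := hD
  have htrace : range e ⊆ closure (range e ∩ 𝔰.inducedSet) := by
    rw [inter_comm, ← image_preimage_eq_inter_range]
    exact he.range_subset_closure_image_dense hdense
  exact ⟨𝔰.comap (he.isClosedEmbedding hinj) (𝔰.exists_ge_mapsTo (isCompact_range he) htrace),
    𝔰.inducedSet_comap ..⟩

theorem preimage_of_injective_prodMk {K X : Type (max u v)} [TopologicalSpace K] [CompactSpace K]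
    [TopologicalSpace X] [T2Space X] {D : Set X} (hD : IsInducedByRSkeleton D) {q : K → X}
    (hq : Continuous q) {Z : Type v} [TopologicalSpace Z] [MetrizableSpace Z] {h : K → Z}
    (hh : Continuous h) (hinj : Function.Injective fun x => (q x, h x))
    (hdense : Dense (q ⁻¹' D)) : IsInducedByRSkeleton (q ⁻¹' D) := by
  obtain ⟨𝔰, rfl⟩ := hD
  exact preimage_of_injective ⟨𝔰.prodId Z, 𝔰.inducedSet_prodId Z⟩ (hq.prodMk hh) hinj hdense

end IsInducedByRSkeleton

theorem exists_continuous_quotient_collapseSetoid_ne {K : Type u} [TopologicalSpace K]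
    [T4Space K] {F : Set K} (hF : IsClosed F) {x y : K} (hx : x ∉ F) (hxy : x ≠ y) :
    ∃ g : Quotient (collapseSetoid F) → ℝ, Continuous g ∧ g ⟦x⟧ ≠ g ⟦y⟧ := by
  have hdisj : Disjoint {x} (F ∪ {y}) := by simp [hx, hxy]
  obtain ⟨f, hf0, hf1, -⟩ := exists_continuous_zero_one_of_isClosed
    isClosed_singleton (hF.union isClosed_singleton) hdisj
  have hlift (a b : K) (hab : (collapseSetoid F).r a b) : f a = f b := by
    rcases hab with rfl | ⟨ha, hb⟩
    · rfl
    · exact (hf1 (.inl ha)).trans (hf1 (.inl hb)).symm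
  refine ⟨Quotient.lift f hlift, f.continuous.quotient_lift hlift, ?_⟩
  rw [Quotient.lift_mk, Quotient.lift_mk, hf0 (mem_singleton x), hf1 (.inr (mem_singleton y))]
  exact zero_ne_one

theorem t2Space_quotient_collapseSetoid {K : Type u} [TopologicalSpace K] [T4Space K] {F : Set K}
    (hF : IsClosed F) : T2Space (Quotient (collapseSetoid F)) := by
  suffices ∀ p q : Quotient (collapseSetoid F), p ≠ q →
      ∃ g : Quotient (collapseSetoid F) → ℝ, Continuous g ∧ g p ≠ g q from
    ⟨fun p q hpq => let ⟨_, hg, hne⟩ := this p q hpq; separated_by_continuous hg hne⟩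
  refine Quotient.ind₂ fun x y hpq => ?_
  have hxy : x ≠ y := fun h => hpq (congrArg _ h)
  by_cases hx : x ∈ F
  · have hy : y ∉ F := fun hy => hpq (Quotient.sound (.inr ⟨hx, hy⟩))
    obtain ⟨g, hg, hne⟩ := exists_continuous_quotient_collapseSetoid_ne hF hy hxy.symm
    exact ⟨g, hg, hne.symm⟩
  · exact exists_continuous_quotient_collapseSetoid_ne hF hx hxy

theorem inducedByRSkeleton_of_collapse_quotient_general {K L : Type u} [TopologicalSpace K]
    [CompactSpace K] [T2Space K] [TopologicalSpace L] [T2Space L] {F : Set K} (hF : IsClosed F)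
    [MetrizableSpace F] {q : K → L} (hq : Continuous q)
    (hqF : ∀ x y, q x = q y → x = y ∨ (x ∈ F ∧ y ∈ F)) {D : Set L} (hD : IsInducedByRSkeleton D)
    (hdense : Dense (q ⁻¹' D)) : IsInducedByRSkeleton (q ⁻¹' D) := by
  have : CompactSpace F := isCompact_iff_compactSpace.1 hF.isCompact
  obtain ⟨h, hinj⟩ := exists_continuousMap_injOn_of_isClosed hF
  refine hD.preimage_of_injective_prodMk hq h.continuous (fun x y hxy => ?_) hdense
  obtain ⟨hqxy, hhxy⟩ := Prod.ext_iff.1 hxy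
  rcases hqF x y hqxy with heq | ⟨hx, hy⟩
  · exact heq
  · exact hinj hx hy hhxy

/-- Let `K` be compact Hausdorff, `F ⊆ K` closed and metrizable, and let `L` be the quotient
of `K` collapsing `F` to a point, with quotient map `Q`. If `D` is induced by an r-skeleton
in `L` and `Q ⁻¹' D` is dense in `K`, then `Q ⁻¹' D` is induced by an r-skeleton in `K`. -/
theorem inducedByRSkeleton_of_collapse_quotient (K : Type u) [TopologicalSpace K]
    [CompactSpace K] [T2Space K] (F : Set K) (hF : IsClosed F)
    (hFmetr : MetrizableSpace ↥F)
    (D : Set (Quotient (collapseSetoid F)))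
    (hD : IsInducedByRSkeleton D)
    (hdense : Dense (Quotient.mk (collapseSetoid F) ⁻¹' D)) :
    IsInducedByRSkeleton (Quotient.mk (collapseSetoid F) ⁻¹' D) := by
  have := t2Space_quotient_collapseSetoid hF
  exact inducedByRSkeleton_of_collapse_quotient_general hF continuous_quotient_mk'
    (fun _ _ => Quotient.exact) hD hdense
end

section
/- Let (X, ‖·‖) be a Banach space such that the ordinal interval [0,ω₁] embeds homeomorphically into (B_{X*}, w*). Then for any ε ∈ (0,1) there is an equivalent norm |||·||| on X such that (1−ε)|||·||| ≤ ‖·‖ ≤ |||·||| and the dual unit ball of (X, |||·|||), equipped with the weak* topology, does not have a retractional skeleton. -/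
open Filter Topology TopologicalSpace Set

universe u v

/-- A projectional skeleton in a normed space `X`: a family of bounded linear projections
indexed by an up-directed (nonempty) partially ordered set `Γ` such that
(i) `X = ⋃ s, P s [X]` and each `P s [X]` is separable;
(ii) `s ≤ t` implies `P s ∘ P t = P t ∘ P s = P s`;
(iii) each strictly increasing sequence has a supremum `t` with
`P t [X] = closure (⋃ n, P (f n) [X])`. -/
structure ProjectionalSkeleton (X : Type u) [NormedAddCommGroup X] [NormedSpace ℝ X] :
    Type (u + 1) where
  Γ : Type u
  [po : PartialOrder Γ]
  [ne : Nonempty Γ]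
  directed : ∀ s t : Γ, ∃ w, s ≤ w ∧ t ≤ w
  P : Γ → X →L[ℝ] X
  idem : ∀ s, ∀ x : X, P s (P s x) = P s x
  separable : ∀ s, IsSeparable (Set.range (P s))
  covers : ∀ x : X, ∃ s, x ∈ Set.range (P s)
  comp_eq_of_le : ∀ s t : Γ, s ≤ t → ∀ x : X, P s (P t x) = P s x ∧ P t (P s x) = P s x
  sup_seq : ∀ f : ℕ → Γ, StrictMono f → ∃ t : Γ, IsLUB (Set.range f) t ∧
    (Set.range (P t) : Set X) = closure (⋃ n, Set.range (P (f n)))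

/-- `X` has a 1-projectional skeleton: a projectional skeleton with `‖P s‖ ≤ 1` for all `s`. -/
def Has1ProjectionalSkeleton (X : Type u) [NormedAddCommGroup X] [NormedSpace ℝ X] : Prop :=
  ∃ 𝔰 : ProjectionalSkeleton X, ∀ s, ‖𝔰.P s‖ ≤ 1

/-- The closed unit ball of the dual of `X`, as a subset of the weak* dual `(X*, w*)`. -/
def dualBall (X : Type u) [NormedAddCommGroup X] [NormedSpace ℝ X] : Set (WeakDual ℝ X) :=
  {φ | ∀ x : X, |φ x| ≤ ‖x‖}

/-- `N` is a norm on `X` equivalent to the given norm `‖·‖`. -/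
def IsEquivNorm {X : Type u} [NormedAddCommGroup X] [NormedSpace ℝ X] (N : X → ℝ) : Prop :=
  (∀ (a : ℝ) (x : X), N (a • x) = |a| * N x) ∧
  (∀ x y : X, N (x + y) ≤ N x + N y) ∧
  (∃ c C : ℝ, 0 < c ∧ ∀ x : X, c * ‖x‖ ≤ N x ∧ N x ≤ C * ‖x‖)

/-- The Banach space `(X, N)` has a 1-projectional skeleton: since an equivalent norm induces
the same topology, this means a projectional skeleton whose projections satisfy
`N (P s x) ≤ N x`, i.e. have norm at most `1` with respect to `N`. -/
def Has1ProjectionalSkeletonWrt {X : Type u} [NormedAddCommGroup X] [NormedSpace ℝ X]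
    (N : X → ℝ) : Prop :=
  ∃ 𝔰 : ProjectionalSkeleton X, ∀ s, ∀ x : X, N (𝔰.P s x) ≤ N x

/-- The closed unit ball of the dual of `(X, N)`, as a subset of the weak* dual. -/
def dualBallWrt {X : Type u} [NormedAddCommGroup X] [NormedSpace ℝ X] (N : X → ℝ) :
    Set (WeakDual ℝ X) :=
  {φ | ∀ x : X, |φ x| ≤ N x}

/-- The first uncountable ordinal `ω₁`. -/
noncomputable def omega1 : Ordinal.{0} := (Cardinal.aleph 1).ord

/-- The ordinal segment `[0, ω₁]` with its (order-induced) topology. -/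
abbrev OrdinalSegmentOmega1 : Type 1 := ↥(Set.Iic omega1)

/-!
Translating the copy of `[0, ω₁]` so that its last point becomes `0` gives a chain of nonzero
functionals `y α`, `α < ω₁`, which converges to `0`. Passing to a tail, choose `a`, `b` biorthogonal
to vectors `x₀`, `x₁` which the chain annihilates, and add to the dual ball the circle
`cos θ • a + sin θ • b` and the points `a + y α`.

Suppose that a retractional skeleton exists. The points of the circle close to `a`, except `a`, are
exposed in the new ball; hence they are `G_δ` points, so that all large retractions fix them, and
therefore fix their limit `a`. The face exposed by `x₀` is the weak* closed convex hull of the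
points `a + y α`. By pressing down there are bounded vectors `w l` with `y α (w l) ≥ 1 / 2` for all
`α ≤ l`, and averaging them shows that each `φ` in this face with `(φ - a) (w α) ≥ 1 / 2` for some
`α` satisfies `(φ - a) (w l) ≥ δ` for all large `l`, where `δ > 0` is fixed. The closure of a
countable set of such `φ` still consists of points with the latter property. However, every
retraction sends the far points of the chain to its value at `a`, so that alternating a small and a
large retraction yields countably many such `φ` accumulating at `a`, which lacks that property.
-/

/-! ### Countably complete filters -/

section CountableInterFilter

variable {ι : Type*}

lemma eventually_eq_of_tendsto {M : Type*} [TopologicalSpace M] [T1Space M]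
    [FirstCountableTopology M] {F : Filter ι} [CountableInterFilter F] {g : ι → M} {m : M}
    (hg : Tendsto g F (𝓝 m)) : ∀ᶠ i in F, g i = m := by
  obtain ⟨U, hU⟩ := (𝓝 m).exists_antitone_basis
  have hmem : ∀ᶠ i in F, ∀ n, g i ∈ U n := eventually_countable_forall.2 fun n => hg (hU.mem n)
  filter_upwards [hmem] with i hi
  by_contra hne
  obtain ⟨n, -, hn⟩ := hU.1.mem_iff.1 (isOpen_compl_singleton.mem_nhds (Ne.symm hne))
  exact hn (hi n) rfl

lemma closure_subset_setOf_eventually_mem {K : Type*} [TopologicalSpace K] {F : Filter ι}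
    [CountableInterFilter F] {A : ι → Set K} (hA : ∀ i, IsClosed (A i)) {T : Set K}
    (hT : T.Countable) (hTA : T ⊆ {ψ | ∀ᶠ i in F, ψ ∈ A i}) :
    closure T ⊆ {ψ | ∀ᶠ i in F, ψ ∈ A i} := by
  have hsub : ∀ᶠ i in F, T ⊆ A i := (eventually_countable_ball hT).2 hTA
  exact fun ψ hψ => hsub.mono fun i hi => closure_minimal hi (hA i) hψ

lemma countableInterFilter_atTop_of_bddAbove [Preorder ι] [IsDirectedOrder ι] [Nonempty ι]
    (h : ∀ s : ℕ → ι, BddAbove (Set.range s)) : CountableInterFilter (atTop : Filter ι) := by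
  refine ⟨fun S hS hmem => ?_⟩
  rcases S.eq_empty_or_nonempty with rfl | hne
  · simp
  obtain ⟨U, rfl⟩ := hS.exists_eq_range hne
  choose s hs using fun n => mem_atTop_sets.1 (hmem (U n) ⟨n, rfl⟩)
  obtain ⟨b, hb⟩ := h s
  refine mem_atTop_sets.2 ⟨b, fun c hc => Set.mem_sInter.2 ?_⟩
  rintro _ ⟨n, rfl⟩
  exact hs n c ((hb ⟨n, rfl⟩).trans hc)

end CountableInterFilter

/-! ### Retractional skeletons -/

namespace RetractionalSkeleton

attribute [local instance] RetractionalSkeleton.po RetractionalSkeleton.ne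

variable {K : Type u} [TopologicalSpace K] (S : RetractionalSkeleton K)

instance isDirectedOrder : IsDirectedOrder S.Γ := ⟨S.directed⟩

lemma exists_tendsto_of_monotone {q : ℕ → S.Γ} (hq : Monotone q) :
    ∃ t, (∀ n, q n ≤ t) ∧ ∃ k : ℕ → ℕ, StrictMono k ∧
      ∀ x, Tendsto (fun n => S.r (q (k n)) x) atTop (𝓝 (S.r t x)) := by
  obtain ⟨k, hk⟩ := exists_increasing_or_nonincreasing_subseq (· < ·) q
  suffices h : ∃ t, (∀ n, q (k n) ≤ t) ∧
      ∀ x, Tendsto (fun n => S.r (q (k n)) x) atTop (𝓝 (S.r t x)) by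
    obtain ⟨t, ht, hlim⟩ := h
    exact ⟨t, fun n => (hq (k.strictMono.id_le n)).trans (ht n), k, k.strictMono, hlim⟩
  rcases hk with hlt | hnlt
  · obtain ⟨t, ht, hlim⟩ := S.sup_seq (fun n => q (k n)) fun m n hmn => hlt m n hmn
    exact ⟨t, fun n => ht.1 ⟨n, rfl⟩, hlim⟩
  · have hconst : ∀ n, q (k n) = q (k 0) := fun n => by
      rcases n.eq_zero_or_pos with rfl | hn
      · rfl
      · exact ((hq (k.monotone hn.le)).eq_of_not_lt (hnlt 0 n hn)).symm
    exact ⟨q (k 0), fun n => (hconst n).le, fun x => by simp only [hconst, tendsto_const_nhds]⟩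

instance countableInterFilter_atTop : CountableInterFilter (atTop : Filter S.Γ) := by
  refine countableInterFilter_atTop_of_bddAbove fun s => ?_
  choose w hw_left hw_right using S.directed
  let q : ℕ → S.Γ := fun n => Nat.rec (s 0) (fun n t => w t (s (n + 1))) n
  have hsq : ∀ n, s n ≤ q n := by
    rintro (_ | n)
    · exact le_rfl
    · exact hw_right _ _
  obtain ⟨t, ht, -⟩ :=
    S.exists_tendsto_of_monotone (q := q) (monotone_nat_of_le_succ fun n => hw_left _ _)
  exact ⟨t, by rintro _ ⟨n, rfl⟩; exact (hsq n).trans (ht n)⟩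

lemma apply_eq_self_of_le {s t : S.Γ} (hst : s ≤ t) {x : K} (hx : S.r s x = x) :
    S.r t x = x := by
  simpa only [hx] using (S.comp_eq_of_le s t hst x).2

lemma mem_inducedSet_iff_eventually {x : K} :
    x ∈ S.inducedSet ↔ ∀ᶠ t in atTop, S.r t x = x := by
  constructor
  · intro hx
    obtain ⟨s, y, rfl⟩ := Set.mem_iUnion.1 hx
    exact (eventually_ge_atTop s).mono fun t hst =>
      S.apply_eq_self_of_le hst (S.isRetraction s y)
  · intro hx
    obtain ⟨t, ht⟩ := hx.exists
    exact Set.mem_iUnion.2 ⟨t, x, ht⟩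

lemma eventually_apply_eq_of_continuous {M : Type*} [TopologicalSpace M] [T1Space M]
    [FirstCountableTopology M] {g : K → M} (hg : Continuous g) (x : K) :
    ∀ᶠ t in atTop, g (S.r t x) = g x :=
  eventually_eq_of_tendsto ((hg.tendsto x).comp (S.tendsto_id x))

lemma mem_inducedSet_of_forall_eq {M : Type*} [TopologicalSpace M] [T1Space M]
    [FirstCountableTopology M] {g : K → M} (hg : Continuous g) {x : K}
    (hx : ∀ y, g y = g x → y = x) : x ∈ S.inducedSet :=
  S.mem_inducedSet_iff_eventually.2 ((S.eventually_apply_eq_of_continuous hg x).mono fun _ => hx _)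

lemma mem_inducedSet_of_tendsto [T2Space K] {ι : Type*} {F : Filter ι} [F.NeBot]
    [F.IsCountablyGenerated] {p : ι → K} {x : K} (hp : Tendsto p F (𝓝 x))
    (hmem : ∀ᶠ i in F, p i ∈ S.inducedSet) : x ∈ S.inducedSet := by
  obtain ⟨k, hk, hk_mem⟩ := exists_seq_forall_of_frequently hmem.frequently
  have hfix : ∀ᶠ t in atTop, ∀ n, S.r t (p (k n)) = p (k n) :=
    eventually_countable_forall.2 fun n => S.mem_inducedSet_iff_eventually.1 (hk_mem n)
  refine S.mem_inducedSet_iff_eventually.2 (hfix.mono fun t ht => ?_)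
  have hlim := hp.comp hk
  exact tendsto_nhds_unique (((S.r t).continuous.tendsto x).comp hlim)
    (hlim.congr fun n => (ht n).symm)

lemma eventually_apply_eq_of_tendsto {ι : Type*} {F : Filter ι} [CountableInterFilter F]
    {e : ι → K} {x : K} (he : Tendsto e F (𝓝 x)) (s : S.Γ) :
    ∀ᶠ i in F, S.r s (e i) = S.r s x := by
  have := S.metrizable s
  have hlim : Tendsto (fun i => Set.rangeFactorization (S.r s) (e i)) F
      (𝓝 (Set.rangeFactorization (S.r s) x)) :=
    (((S.r s).continuous.subtype_mk Set.mem_range_self).tendsto x).comp he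
  exact (eventually_eq_of_tendsto hlim).mono fun i hi => congrArg Subtype.val hi

/-- A cluster point of `u` is fixed by `r (sup t)`, which sends it to `lim r (t n) = a`. -/
lemma mem_closure_range_of_apply_eq [CompactSpace K] [T2Space K] {a : K} {t : ℕ → S.Γ}
    (ht : Monotone t) (ha : ∀ n, S.r (t n) a = a) {u : ℕ → K}
    (hu : ∀ n, S.r (t (n + 1)) (u n) = u n) (hua : ∀ n, S.r (t n) (u n) = a) :
    a ∈ closure (Set.range u) := by
  let G : Filter ℕ := hyperfilter ℕ
  obtain ⟨φ, hφ⟩ : ∃ φ, Tendsto u G (𝓝 φ) := ⟨_, ((hyperfilter ℕ).map u).le_nhds_lim⟩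
  have hr (s : S.Γ) : Tendsto (fun n => S.r s (u n)) G (𝓝 (S.r s φ)) :=
    ((S.r s).continuous.tendsto φ).comp hφ
  obtain ⟨T, hT, k, -, hlim⟩ := S.exists_tendsto_of_monotone ht
  have hfix : S.r T φ = φ :=
    tendsto_nhds_unique (hr T)
      (hφ.congr fun n => (S.apply_eq_self_of_le (hT (n + 1)) (hu n)).symm)
  have hφa (m : ℕ) : S.r (t m) φ = a := by
    refine tendsto_nhds_unique (hr (t m)) (tendsto_const_nhds.congr' ?_)
    filter_upwards [Nat.hyperfilter_le_atTop (eventually_ge_atTop m)] with n hmn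
    calc a = S.r (t m) (S.r (t n) (u n)) := by rw [hua, ha]
      _ = S.r (t m) (u n) := (S.comp_eq_of_le _ _ (ht hmn) _).1
  have hTa : S.r T φ = a :=
    tendsto_nhds_unique (hlim φ) (tendsto_const_nhds.congr fun n => (hφa (k n)).symm)
  rw [← hTa, hfix]
  exact mem_closure_of_tendsto hφ (Eventually.of_forall Set.mem_range_self)

/-- Retractions `r s` send the tail of `e` to `a`, while each `e i` is replaced by `r t (e i)`,
which still lies in `B`; alternating the two along a sequence `s ≤ t ≤ …` yields a countable subset
of `B` accumulating at `a`. -/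
lemma mem_of_tendsto_of_forall_countable_closure_subset [CompactSpace K] [T2Space K]
    {ι : Type*} {F : Filter ι} [F.NeBot] [CountableInterFilter F] {a : K} (ha : a ∈ S.inducedSet)
    {e : ι → K} (he : Tendsto e F (𝓝 a)) {B : Set K} (hB : ∀ T ⊆ B, T.Countable → closure T ⊆ B)
    {M : Type*} [TopologicalSpace M] [T1Space M] [FirstCountableTopology M] {g : ι → K → M}
    (hg : ∀ i, Continuous (g i)) (hgB : ∀ i ψ, g i ψ = g i (e i) → ψ ∈ B) : a ∈ B := by
  obtain ⟨s₀, hs₀⟩ := (S.mem_inducedSet_iff_eventually.1 ha).exists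
  have step (s : {s // s₀ ≤ s}) : ∃ t : {s // s₀ ≤ s}, s ≤ t ∧
      ∃ ψ ∈ B, S.r t.1 ψ = ψ ∧ S.r s.1 ψ = a := by
    obtain ⟨i, hi⟩ := (S.eventually_apply_eq_of_tendsto he s.1).exists
    obtain ⟨t, ht, hst⟩ := ((S.eventually_apply_eq_of_continuous (hg i) (e i)).and
      (eventually_ge_atTop s.1)).exists
    refine ⟨⟨t, s.2.trans hst⟩, hst, S.r t (e i), hgB i _ ht, S.isRetraction t _, ?_⟩
    rw [(S.comp_eq_of_le s.1 t hst _).1, hi, S.apply_eq_self_of_le s.2 hs₀]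
  choose next hnext ψ hψB hψ_fix hψ_a using step
  let q : ℕ → {s // s₀ ≤ s} := fun n => Nat.rec ⟨s₀, le_rfl⟩ (fun _ => next) n
  have hq : Monotone fun n => (q n).1 := monotone_nat_of_le_succ fun n => hnext (q n)
  have hcl : a ∈ closure (Set.range fun n => ψ (q n)) :=
    S.mem_closure_range_of_apply_eq hq (fun n => S.apply_eq_self_of_le (q n).2 hs₀)
      (fun n => hψ_fix (q n)) fun n => hψ_a (q n)
  exact hB _ (Set.range_subset_iff.2 fun n => hψB (q n)) (Set.countable_range _) hcl

end RetractionalSkeleton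

section DualBall

variable {X : Type u} [NormedAddCommGroup X] [NormedSpace ℝ X]

lemma isCompact_dualBallWrt {N : X → ℝ} {M : ℝ} (hN : ∀ x, N x ≤ M * ‖x‖) :
    IsCompact (dualBallWrt N) := by
  refine (WeakDual.isCompact_closedBall (0 : StrongDual ℝ X) (max M 0)).of_isClosed_subset
    ?_ fun φ hφ => ?_
  · simp only [dualBallWrt, Set.ofPred_forall]
    exact isClosed_iInter fun x =>
      isClosed_le (WeakDual.eval_continuous x).abs continuous_const
  · simp only [Set.mem_preimage, mem_closedBall_zero_iff]
    exact ContinuousLinearMap.opNorm_le_bound _ (le_max_right M 0) fun x =>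
      (hφ x).trans ((hN x).trans (mul_le_mul_of_nonneg_right (le_max_left M 0) (norm_nonneg x)))

lemma apply_le_of_frequently_le {N : X → ℝ} {φ : WeakDual ℝ X} (hφ : φ ∈ dualBallWrt N)
    {z v : X} (hz : φ z = 1) {k : ℝ} (h : ∃ᶠ τ in 𝓝[>] (0 : ℝ), N (z + τ • v) ≤ 1 + τ * k) :
    φ v ≤ k := by
  obtain ⟨τ, hτ, hτ_pos⟩ := (h.and_eventually self_mem_nhdsWithin).exists
  have hle : φ (z + τ • v) ≤ 1 + τ * k := (le_abs_self _).trans ((hφ _).trans hτ)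
  rw [map_add, map_smul, hz, smul_eq_mul, add_le_add_iff_left] at hle
  exact le_of_mul_le_mul_left hle hτ_pos

/-- The support function of the symmetrization of a set `G` of functionals. It is the norm whose
dual ball is the weak* closed absolutely convex hull of `G` (when `G` is bounded and contains a
dual ball). -/
noncomputable def supportNorm (G : Set (WeakDual ℝ X)) (x : X) : ℝ := ⨆ φ : G, |φ.1 x|

lemma supportNorm_le {G : Set (WeakDual ℝ X)} {x : X} {m : ℝ} (hm : 0 ≤ m)
    (h : ∀ φ ∈ G, |φ x| ≤ m) : supportNorm G x ≤ m :=
  Real.iSup_le (fun φ => h φ.1 φ.2) hm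

section Bounded

variable {G : Set (WeakDual ℝ X)} {M : ℝ} (hM : ∀ φ ∈ G, ∀ x, |φ x| ≤ M * ‖x‖)
include hM

lemma supportNorm_le_mul_norm (hG : G.Nonempty) (x : X) : supportNorm G x ≤ M * ‖x‖ :=
  have := hG.to_subtype
  ciSup_le fun φ => hM φ.1 φ.2 x

lemma subset_dualBallWrt_supportNorm : G ⊆ dualBallWrt (supportNorm G) := fun φ hφ x =>
  le_ciSup (f := fun φ : G => |φ.1 x|)
    ⟨M * ‖x‖, by rintro _ ⟨ψ, rfl⟩; exact hM ψ.1 ψ.2 x⟩ ⟨φ, hφ⟩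

lemma norm_le_supportNorm (hG : dualBall X ⊆ G) (x : X) : ‖x‖ ≤ supportNorm G x := by
  obtain ⟨g, hg, hgx⟩ := exists_dual_vector'' ℝ x
  have hmem : StrongDual.toWeakDual g ∈ dualBall X := fun z =>
    (g.le_opNorm z).trans (mul_le_of_le_one_left (norm_nonneg z) hg)
  calc ‖x‖ = g x := hgx.symm
    _ ≤ |g x| := le_abs_self _
    _ ≤ supportNorm G x := subset_dualBallWrt_supportNorm hM (hG hmem) x

lemma isEquivNorm_supportNorm (hG : dualBall X ⊆ G) : IsEquivNorm (supportNorm G) := by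
  have h_zero : (0 : WeakDual ℝ X) ∈ dualBall X := fun x => abs_zero.trans_le (norm_nonneg x)
  have hle := norm_le_supportNorm hM hG
  refine ⟨fun r x => ?_, fun x z => ?_, 1, M, one_pos, fun x =>
    ⟨(one_mul _).trans_le (hle x), supportNorm_le_mul_norm hM ⟨0, hG h_zero⟩ x⟩⟩
  · simp only [supportNorm, map_smul, smul_eq_mul, abs_mul]
    exact (Real.mul_iSup_of_nonneg (abs_nonneg r) _).symm
  · refine supportNorm_le (add_nonneg ((norm_nonneg x).trans (hle x))
      ((norm_nonneg z).trans (hle z))) fun φ hφ => ?_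
    rw [map_add]
    have hφG := subset_dualBallWrt_supportNorm hM hφ
    exact (abs_add_le _ _).trans (add_le_add (hφG x) (hφG z))

end Bounded

end DualBall

/-! ### Uniform positivity along a chain of functionals -/

section Chain

variable {ι : Type*} [LinearOrder ι]

/-- A pressing down argument: otherwise `z (n + 1)`, chosen above a witness `l` of `¬ P (z n) n l`,
has a supremum contradicting `hreg`. -/
lemma exists_forall_of_forall_exists_lt [NoMaxOrder ι] [Nonempty ι]
    (hsup : ∀ z : ℕ → ι, ∃ L, IsLUB (Set.range z) L) {P : ι → ℕ → ι → Prop}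
    (hP : ∀ {ζ ζ' n n' l l'}, ζ ≤ ζ' → n ≤ n' → l' ≤ l → P ζ n l → P ζ' n' l')
    (hreg : ∀ l, ¬ IsMin l → ∃ ζ < l, ∃ n, P ζ n l) : ∃ ζ n, ∀ l, P ζ n l := by
  by_contra! hcon
  choose b hb using hcon
  choose next hnext using fun ζ n => exists_gt (max ζ (b ζ n))
  let z : ℕ → ι := fun n => Nat.rec (Classical.arbitrary ι) (fun n ζ => next ζ n) n
  have hz : ∀ n, max (z n) (b (z n) n) < z (n + 1) := fun n => hnext (z n) n
  have hz_mono : Monotone z :=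
    monotone_nat_of_le_succ fun n => ((le_max_left _ _).trans_lt (hz n)).le
  obtain ⟨L, hL⟩ := hsup z
  have hzL : ∀ n, z n ≤ L := fun n => hL.1 ⟨n, rfl⟩
  have hL_not_min : ¬ IsMin L :=
    not_isMin_of_lt (((le_max_left _ _).trans_lt (hz 0)).trans_le (hzL 1))
  obtain ⟨ζ, hζ, n, hPn⟩ := hreg L hL_not_min
  obtain ⟨_, ⟨k, rfl⟩, hk, -⟩ := hL.exists_between hζ
  have hbL : b (z (max k n)) (max k n) ≤ L :=
    ((le_max_right _ _).trans (hz (max k n)).le).trans (hzL (max k n + 1))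
  exact hb (z (max k n)) (max k n)
    (hP (hk.le.trans (hz_mono (le_max_left k n))) (le_max_right k n) hbL hPn)

lemma exists_forall_half_le_apply [NoMaxOrder ι] [Nonempty ι] [TopologicalSpace ι]
    [OrderTopology ι] (hsup : ∀ z : ℕ → ι, ∃ L, IsLUB (Set.range z) L) {X : Type u}
    [NormedAddCommGroup X] [NormedSpace ℝ X] {y : ι → WeakDual ℝ X} (hy : Continuous y)
    (hne : ∀ l, y l ≠ 0) :
    ∃ (ζ : ι) (n : ℕ), ∀ l, ∃ x : X, ‖x‖ ≤ n ∧ ∀ α ∈ Ioc ζ l, 1 / 2 ≤ y α x := by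
  refine exists_forall_of_forall_exists_lt hsup ?_ fun l hl => ?_
  · rintro ζ ζ' n n' l l' hζ hn hl ⟨x, hx, h⟩
    exact ⟨x, hx.trans (by exact_mod_cast hn), fun α hα => h α (Ioc_subset_Ioc hζ hl hα)⟩
  · obtain ⟨v, hv⟩ := DFunLike.ne_iff.1 (hne l)
    set x : X := (y l v)⁻¹ • v
    have hx : y l x = 1 := by rw [map_smul, smul_eq_mul, inv_mul_cancel₀ hv]
    have hnhds : {α | 1 / 2 < y α x} ∈ 𝓝 l :=
      (isOpen_lt continuous_const ((WeakDual.eval_continuous x).comp hy)).mem_nhds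
        (show 1 / 2 < y l x by rw [hx]; norm_num)
    obtain ⟨ζ, hζ, hsub⟩ := exists_Ioc_subset_of_mem_nhds hnhds (not_isMin_iff.1 hl)
    obtain ⟨n, hn⟩ := exists_nat_ge ‖x‖
    exact ⟨ζ, hζ, n, x, hn, fun α hα => (hsub hα).le⟩

end Chain

/-! ### The renorming -/

lemma neg_le_sum_range {f : ℕ → ℝ} {C : ℝ} (hC : 0 ≤ C) (hf : ∀ n, -C ≤ f n)
    (h_zero : ∀ n, 0 ≤ f n ∨ ∀ j < n, f j = 0) (n : ℕ) : -C ≤ ∑ j ∈ Finset.range n, f j := by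
  induction n with
  | zero => simpa using hC
  | succ n ih =>
    rw [Finset.sum_range_succ]
    rcases h_zero n with hn | hn
    · exact ih.trans (le_add_of_nonneg_right hn)
    · rw [Finset.sum_eq_zero fun j hj => hn j (Finset.mem_range.1 hj), zero_add]
      exact hf n

/-- The data from which the new norm is built: functionals `a`, `b` biorthogonal to `x₀`, `x₁`, and
a chain `y` of functionals which vanishes at `x₀`, `x₁`, tends to `0`, and is uniformly positive
along initial segments: each `y α` with `α ≤ l` is at least `1 / 2` at `w l`. The number `M` bounds
the distortion of the norm. -/
structure RenormingSystem (X : Type u) [NormedAddCommGroup X] [NormedSpace ℝ X] (ι : Type*)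
    [Preorder ι] (M : ℝ) where
  a : WeakDual ℝ X
  b : WeakDual ℝ X
  x₀ : X
  x₁ : X
  y : ι → WeakDual ℝ X
  w : ι → X
  C : ℝ
  a_x₀ : a x₀ = 1
  a_x₁ : a x₁ = 0
  b_x₀ : b x₀ = 0
  b_x₁ : b x₁ = 1
  y_x₀ : ∀ i, y i x₀ = 0
  y_x₁ : ∀ i, y i x₁ = 0
  norm_x₀_lt_one : ‖x₀‖ < 1
  tendsto_y : Tendsto y atTop (𝓝 0)
  half_le_y_w : ∀ l, ∀ α ≤ l, 1 / 2 ≤ y α (w l)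
  abs_y_w_le : ∀ l α, |y α (w l)| ≤ C
  abs_a_add_abs_b_le : ∀ x, |a x| + |b x| ≤ M * ‖x‖
  abs_a_add_abs_y_le : ∀ i x, |a x| + |y i x| ≤ M * ‖x‖

namespace RenormingSystem

variable {X : Type u} [NormedAddCommGroup X] [NormedSpace ℝ X] {ι : Type*} {M : ℝ}

section Preorder

variable [Preorder ι] (c : RenormingSystem X ι M)

/-- The circle of radius one in the plane spanned by `a` and `b`. -/
def circle : Set (WeakDual ℝ X) := {φ | ∃ s t : ℝ, s ^ 2 + t ^ 2 = 1 ∧ s • c.a + t • c.b = φ}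

/-- The functionals generating the new dual ball: the old dual ball, the circle through `a` and
`b`, and the chain translated so that it tends to `a`. -/
def generators : Set (WeakDual ℝ X) :=
  dualBall X ∪ c.circle ∪ Set.range fun i => c.a + c.y i

/-- The new norm. Its dual ball is the weak* closed absolutely convex hull of the generators, but
only the inclusion `generators_subset_dualBallWrt_N` and upper bounds for the norm are needed. -/
noncomputable def N : X → ℝ := supportNorm c.generators

include c in
lemma one_le : 1 ≤ M := by
  have h : 1 ≤ M * ‖c.x₀‖ := by simpa [c.a_x₀, c.b_x₀] using c.abs_a_add_abs_b_le c.x₀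
  have hM : 0 < M := pos_of_mul_pos_left (one_pos.trans_le h) (norm_nonneg _)
  exact h.trans (mul_le_of_le_one_right hM.le c.norm_x₀_lt_one.le)

lemma C_pos [Nonempty ι] : 0 < c.C :=
  have l := Classical.arbitrary ι
  one_half_pos.trans_le <| (c.half_le_y_w l l le_rfl).trans <|
    (le_abs_self _).trans (c.abs_y_w_le l l)

lemma abs_a_add_y_le (i : ι) (x : X) : |c.a x + c.y i x| ≤ M * ‖x‖ :=
  (abs_add_le _ _).trans (c.abs_a_add_abs_y_le i x)

lemma abs_le_of_mem_generators {φ : WeakDual ℝ X} (hφ : φ ∈ c.generators) (x : X) :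
    |φ x| ≤ M * ‖x‖ := by
  obtain (hφ | ⟨s, t, hst, rfl⟩) | ⟨i, rfl⟩ := hφ
  · exact (hφ x).trans (le_mul_of_one_le_left (norm_nonneg x) c.one_le)
  · have hs : |s| ≤ 1 := abs_le_one_iff_mul_self_le_one.2 (by nlinarith [sq_nonneg t])
    have ht : |t| ≤ 1 := abs_le_one_iff_mul_self_le_one.2 (by nlinarith [sq_nonneg s])
    calc |s * c.a x + t * c.b x| ≤ |s| * |c.a x| + |t| * |c.b x| := by
          simpa only [abs_mul] using abs_add_le (s * c.a x) (t * c.b x)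
      _ ≤ |c.a x| + |c.b x| := add_le_add (mul_le_of_le_one_left (abs_nonneg _) hs)
          (mul_le_of_le_one_left (abs_nonneg _) ht)
      _ ≤ M * ‖x‖ := c.abs_a_add_abs_b_le x
  · exact c.abs_a_add_y_le i x

lemma dualBall_subset_generators : dualBall X ⊆ c.generators :=
  subset_union_left.trans subset_union_left

lemma generators_subset_dualBallWrt_N : c.generators ⊆ dualBallWrt c.N :=
  subset_dualBallWrt_supportNorm fun _ => c.abs_le_of_mem_generators

lemma isEquivNorm_N : IsEquivNorm c.N :=
  isEquivNorm_supportNorm (fun _ => c.abs_le_of_mem_generators) c.dualBall_subset_generators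

lemma norm_le_N (x : X) : ‖x‖ ≤ c.N x :=
  norm_le_supportNorm (fun _ => c.abs_le_of_mem_generators) c.dualBall_subset_generators x

lemma circle_subset_dualBallWrt_N : c.circle ⊆ dualBallWrt c.N :=
  (subset_union_right.trans subset_union_left).trans c.generators_subset_dualBallWrt_N

lemma a_mem_circle : c.a ∈ c.circle := ⟨1, 0, by norm_num, by simp⟩

lemma a_mem_dualBallWrt_N : c.a ∈ dualBallWrt c.N := c.circle_subset_dualBallWrt_N c.a_mem_circle

lemma a_add_y_mem_dualBallWrt_N (i : ι) : c.a + c.y i ∈ dualBallWrt c.N :=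
  c.generators_subset_dualBallWrt_N (Or.inr ⟨i, rfl⟩)

lemma N_le_mul_norm (x : X) : c.N x ≤ M * ‖x‖ :=
  supportNorm_le_mul_norm (fun _ => c.abs_le_of_mem_generators)
    ⟨c.a, Or.inl (Or.inr c.a_mem_circle)⟩ x

instance compactSpace_dualBallWrt_N : CompactSpace (dualBallWrt c.N) :=
  isCompact_iff_compactSpace.1 (isCompact_dualBallWrt c.N_le_mul_norm)

lemma N_le {x : X} {m : ℝ} (hm : 0 ≤ m) (h_ball : ‖x‖ ≤ m)
    (h_circle : c.a x ^ 2 + c.b x ^ 2 ≤ m ^ 2) (h_chain : ∀ i, |c.a x + c.y i x| ≤ m) :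
    c.N x ≤ m := by
  refine supportNorm_le hm fun ψ hψ => ?_
  obtain (hψ | ⟨s, t, hst, rfl⟩) | ⟨i, rfl⟩ := hψ
  · exact (hψ x).trans h_ball
  · change |s * c.a x + t * c.b x| ≤ m
    refine abs_le_of_sq_le_sq ?_ hm
    nlinarith [sq_nonneg (s * c.b x - t * c.a x)]
  · exact h_chain i

/-- Near a point of the circle through `x₀` and `x₁` which lies inside the old unit ball, only the
circle and the chain contribute to the one-sided directional derivatives of the new norm. -/
lemma eventually_N_le {s t : ℝ} (hst : s ^ 2 + t ^ 2 = 1) (hz : ‖s • c.x₀ + t • c.x₁‖ < 1) {v : X}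
    {k : ℝ} (hk : s * c.a v + t * c.b v < k)
    (h_chain : ∀ᶠ τ in 𝓝[>] (0 : ℝ), ∀ i, |s + τ * (c.a v + c.y i v)| ≤ 1 + τ * k) :
    ∀ᶠ τ in 𝓝[>] (0 : ℝ), c.N (s • c.x₀ + t • c.x₁ + τ • v) ≤ 1 + τ * k := by
  set z := s • c.x₀ + t • c.x₁ with hz_def
  have haz : c.a z = s := by simp [hz_def, c.a_x₀, c.a_x₁]
  have hbz : c.b z = t := by simp [hz_def, c.b_x₀, c.b_x₁]
  have hyz (i : ι) : c.y i z = 0 := by simp [hz_def, c.y_x₀, c.y_x₁]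
  have h_ball : ∀ᶠ τ in 𝓝[>] (0 : ℝ), ‖z + τ • v‖ < 1 + τ * k :=
    nhdsWithin_le_nhds ((by fun_prop : ContinuousAt (fun τ : ℝ => ‖z + τ • v‖) 0).eventually_lt
      (by fun_prop) (by simpa using hz))
  have h_circle : ∀ᶠ τ in 𝓝[>] (0 : ℝ), τ * (c.a v ^ 2 + c.b v ^ 2) <
      2 * (k - (s * c.a v + t * c.b v)) :=
    nhdsWithin_le_nhds ((by fun_prop : ContinuousAt
      (fun τ : ℝ => τ * (c.a v ^ 2 + c.b v ^ 2)) 0).eventually_lt (by fun_prop) (by simpa using hk))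
  filter_upwards [h_ball, h_circle, h_chain, self_mem_nhdsWithin] with τ h₁ h₂ h₃ (hτ : 0 < τ)
  refine c.N_le ((norm_nonneg _).trans h₁.le) h₁.le ?_ fun i => ?_
  · simp only [map_add, map_smul, smul_eq_mul, haz, hbz]
    calc (s + τ * c.a v) ^ 2 + (t + τ * c.b v) ^ 2
        = 1 + τ * (2 * (s * c.a v + t * c.b v)) + τ * (τ * (c.a v ^ 2 + c.b v ^ 2)) := by
          rw [← hst]; ring
      _ ≤ 1 + τ * (2 * (s * c.a v + t * c.b v)) +
            τ * (2 * (k - (s * c.a v + t * c.b v))) := by gcongr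
      _ ≤ (1 + τ * k) ^ 2 := by nlinarith [sq_nonneg (τ * k)]
  · simp only [map_add, map_smul, smul_eq_mul, haz, hyz]
    convert h₃ i using 2
    ring

lemma apply_le_of_apply_eq_one {φ : WeakDual ℝ X} (hφ : φ ∈ dualBallWrt c.N) {s t : ℝ}
    (hst : s ^ 2 + t ^ 2 = 1) (hz : ‖s • c.x₀ + t • c.x₁‖ < 1)
    (hφz : φ (s • c.x₀ + t • c.x₁) = 1) {v : X} {k : ℝ} (hk : s * c.a v + t * c.b v ≤ k)
    (h_chain : ∀ δ > 0, ∀ᶠ τ in 𝓝[>] (0 : ℝ), ∀ i,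
      |s + τ * (c.a v + c.y i v)| ≤ 1 + τ * (k + δ)) : φ v ≤ k :=
  le_of_forall_pos_le_add fun δ hδ => apply_le_of_frequently_le hφ hφz
    (c.eventually_N_le hst hz (hk.trans_lt (lt_add_of_pos_right k hδ)) (h_chain δ hδ)).frequently

/-- Away from `±x₀` the chain does not contribute either: the new norm is Gateaux smooth there,
with derivative `s • a + t • b`. -/
lemma eq_of_apply_eq_one {φ : WeakDual ℝ X} (hφ : φ ∈ dualBallWrt c.N) {s t : ℝ}
    (hst : s ^ 2 + t ^ 2 = 1) (ht : t ≠ 0) (hz : ‖s • c.x₀ + t • c.x₁‖ < 1)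
    (hφz : φ (s • c.x₀ + t • c.x₁) = 1) : φ = s • c.a + t • c.b := by
  have hs : |s| < 1 := (sq_lt_one_iff_abs_lt_one s).1 (by linarith [sq_pos_of_ne_zero ht])
  have hle (v : X) : φ v ≤ s * c.a v + t * c.b v := by
    refine c.apply_le_of_apply_eq_one hφ hst hz hφz le_rfl fun δ _ => ?_
    set k := s * c.a v + t * c.b v + δ
    have hlt : ∀ᶠ τ in 𝓝[>] (0 : ℝ), |s| + τ * (M * ‖v‖) < 1 + τ * k :=
      nhdsWithin_le_nhds ((by fun_prop : ContinuousAt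
        (fun τ : ℝ => |s| + τ * (M * ‖v‖)) 0).eventually_lt (by fun_prop) (by simpa using hs))
    filter_upwards [hlt, self_mem_nhdsWithin] with τ hτ_lt (hτ : 0 < τ) i
    calc |s + τ * (c.a v + c.y i v)| ≤ |s| + τ * |c.a v + c.y i v| := by
          simpa only [abs_mul, abs_of_pos hτ] using abs_add_le s (τ * (c.a v + c.y i v))
      _ ≤ |s| + τ * (M * ‖v‖) := by gcongr; exact c.abs_a_add_y_le i v
      _ ≤ 1 + τ * k := hτ_lt.le
  refine DFunLike.ext _ _ fun v => le_antisymm (hle v) ?_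
  have hneg := hle (-v)
  simp only [map_neg] at hneg
  change s * c.a v + t * c.b v ≤ φ v
  linarith

/-- The face of the new dual ball exposed by `x₀` is the weak* closed convex hull of the chain
`a + y i`; this is expressed through support functions. -/
lemma sub_apply_le_of_forall_y_le [IsDirectedOrder ι] [Nonempty ι] {φ : WeakDual ℝ X}
    (hφ : φ ∈ dualBallWrt c.N) (hφ_face : φ c.x₀ = 1) {v : X} {m : ℝ}
    (hm : ∀ i, c.y i v ≤ m) : φ v - c.a v ≤ m := by
  have hm_nonneg : 0 ≤ m :=
    le_of_tendsto' (((WeakDual.eval_continuous v).tendsto 0).comp c.tendsto_y) hm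
  refine sub_le_iff_le_add'.2 (c.apply_le_of_apply_eq_one hφ (s := 1) (t := 0) (by norm_num)
    (by simpa using c.norm_x₀_lt_one) (by simpa using hφ_face) (by simpa using hm_nonneg)
    fun δ hδ => ?_)
  have hlt : ∀ᶠ τ in 𝓝[>] (0 : ℝ), -(1 + τ * (c.a v + m + δ)) < 1 - τ * (M * ‖v‖) :=
    nhdsWithin_le_nhds ((by fun_prop : ContinuousAt
      (fun τ : ℝ => -(1 + τ * (c.a v + m + δ))) 0).eventually_lt (by fun_prop) (by norm_num))
  filter_upwards [hlt, self_mem_nhdsWithin] with τ hτ_lt (hτ : 0 < τ) i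
  have h_lower : -(M * ‖v‖) ≤ c.a v + c.y i v := (abs_le.1 (c.abs_a_add_y_le i v)).1
  have h_upper : c.a v + c.y i v ≤ c.a v + m + δ := by linarith [hm i]
  refine abs_le.2 ⟨?_, by gcongr⟩
  linarith [mul_le_mul_of_nonneg_left h_lower hτ.le]

variable [CountableInterFilter (atTop : Filter ι)]

lemma eventually_y_apply_eq_zero (x : X) : ∀ᶠ i in atTop, c.y i x = 0 :=
  eventually_eq_of_tendsto (((WeakDual.eval_continuous x).tendsto 0).comp c.tendsto_y)

lemma exists_seq_y_w_eq_zero {p : ι → Prop} (hp : ∃ᶠ l in atTop, p l) :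
    ∃ l : ℕ → ι, (∀ n, p (l n)) ∧ ∀ j n, j < n → ∀ α ≥ l n, c.y α (c.w (l j)) = 0 := by
  refine exists_seq_of_forall_finset_exists p (fun l l' => ∀ α ≥ l', c.y α (c.w l) = 0)
    fun s _ => ?_
  have hs : ∀ᶠ l' in atTop, ∀ l ∈ s, ∀ α ≥ l', c.y α (c.w l) = 0 :=
    (Filter.eventually_all_finset s).2 fun l _ =>
      eventually_forall_ge_atTop.2 (c.eventually_y_apply_eq_zero (c.w l))
  exact (hp.and_eventually hs).exists

end Preorder

section LinearOrder

variable [LinearOrder ι] (c : RenormingSystem X ι M)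
  [CountableInterFilter (atTop : Filter ι)]

/-- For `l 0, l 1, …` given by `exists_seq_y_w_eq_zero`, at most one of the numbers
`y α (w (l j))` is negative, so `w α₀` minus a large multiple of the average of `w (l j)`, `j < n`,
is almost nonpositive on the whole chain. -/
lemma exists_seq_y_apply_le {p : ι → Prop} (hp : ∃ᶠ l in atTop, p l) (α₀ : ι) :
    ∃ l : ℕ → ι, (∀ n, p (l n)) ∧ ∀ (n : ℕ) (α : ι),
      c.y α ((n : ℝ) • c.w α₀ - (2 * c.C) • ∑ j ∈ Finset.range n, c.w (l j)) ≤ 2 * c.C ^ 2 := by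
  have : Nonempty ι := ⟨α₀⟩
  obtain ⟨h, hh⟩ := eventually_atTop.1 (c.eventually_y_apply_eq_zero (c.w α₀))
  obtain ⟨l, hl, hl_zero⟩ := c.exists_seq_y_w_eq_zero (hp.and_eventually (eventually_ge_atTop h))
  refine ⟨l, fun n => (hl n).1, fun n α => ?_⟩
  have hC : 0 ≤ c.C := c.C_pos.le
  simp only [map_sub, map_smul, map_sum, smul_eq_mul]
  rcases le_total α h with hα | hα
  · have hsum : n * (1 / 2) ≤ ∑ j ∈ Finset.range n, c.y α (c.w (l j)) := by
      simpa using Finset.card_nsmul_le_sum (Finset.range n) _ (1 / 2 : ℝ) fun j _ =>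
        c.half_le_y_w (l j) α (hα.trans (hl j).2)
    have hα₀ : n * c.y α (c.w α₀) ≤ n * c.C := by
      gcongr
      exact (abs_le.1 (c.abs_y_w_le α₀ α)).2
    nlinarith
  · have hsum : -c.C ≤ ∑ j ∈ Finset.range n, c.y α (c.w (l j)) :=
      neg_le_sum_range hC (fun j => (abs_le.1 (c.abs_y_w_le (l j) α)).1)
        (fun m => (le_total α (l m)).imp
          (fun hm => one_half_pos.le.trans (c.half_le_y_w (l m) α hm))
          fun hm j hj => hl_zero j m hj α hm) n
    rw [hh α hα]
    nlinarith

lemma eventually_le_sub_apply_w {φ : WeakDual ℝ X} (hφ : φ ∈ dualBallWrt c.N)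
    (hφ_face : φ c.x₀ = 1) {α₀ : ι} (hα₀ : 1 / 2 ≤ φ (c.w α₀) - c.a (c.w α₀)) :
    ∀ᶠ l in atTop, 1 / (8 * c.C) ≤ φ (c.w l) - c.a (c.w l) := by
  have : Nonempty ι := ⟨α₀⟩
  by_contra hcon
  obtain ⟨l, hl, hl_le⟩ := c.exists_seq_y_apply_le (Filter.not_eventually.1 hcon) α₀
  have hC : 0 < c.C := c.C_pos
  obtain ⟨n, hn⟩ := exists_nat_gt (8 * c.C ^ 2)
  have hface := c.sub_apply_le_of_forall_y_le hφ hφ_face (hl_le n)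
  have hsum : ∑ j ∈ Finset.range n, (φ (c.w (l j)) - c.a (c.w (l j))) ≤ n * (1 / (8 * c.C)) := by
    simpa using Finset.sum_le_card_nsmul (Finset.range n) _ (1 / (8 * c.C)) fun j _ =>
      (not_le.1 (hl j)).le
  have hsmall : 2 * c.C * ∑ j ∈ Finset.range n, (φ (c.w (l j)) - c.a (c.w (l j))) ≤ n / 4 :=
    (mul_le_mul_of_nonneg_left hsum (by positivity)).trans_eq (by field_simp; ring)
  have hlarge : n * (1 / 2) ≤ n * (φ (c.w α₀) - c.a (c.w α₀)) := by gcongr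
  simp only [map_sub, map_smul, map_sum, smul_eq_mul, Finset.sum_sub_distrib] at hface hsmall
  linarith

end LinearOrder

section Skeleton

/-- The points `cos θ • a + sin θ • b` with small `θ > 0` are `G_δ` points of the new dual ball,
because they are exposed. They converge to `a`. -/
lemma a_mem_inducedSet [Preorder ι] (c : RenormingSystem X ι M)
    (S : RetractionalSkeleton (dualBallWrt c.N)) :
    ⟨c.a, c.a_mem_dualBallWrt_N⟩ ∈ S.inducedSet := by
  let arc (θ : ℝ) : dualBallWrt c.N := ⟨Real.cos θ • c.a + Real.sin θ • c.b,
    c.circle_subset_dualBallWrt_N ⟨_, _, Real.cos_sq_add_sin_sq θ, rfl⟩⟩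
  let z (θ : ℝ) : X := Real.cos θ • c.x₀ + Real.sin θ • c.x₁
  have harc : Continuous arc := ((Real.continuous_cos.smul continuous_const).add
    (Real.continuous_sin.smul continuous_const)).subtype_mk _
  have harc_z (θ : ℝ) : (arc θ).1 (z θ) = 1 := by
    change Real.cos θ * c.a (z θ) + Real.sin θ * c.b (z θ) = 1
    simp only [z, map_add, map_smul, smul_eq_mul, c.a_x₀, c.a_x₁, c.b_x₀, c.b_x₁]
    linarith [Real.cos_sq_add_sin_sq θ]
  have hlim : Tendsto arc (𝓝[>] 0) (𝓝 (arc 0)) := (harc.tendsto 0).mono_left nhdsWithin_le_nhds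
  have hz : ∀ᶠ θ in 𝓝[>] (0 : ℝ), ‖z θ‖ < 1 :=
    nhdsWithin_le_nhds (((by fun_prop : Continuous fun θ => ‖z θ‖).tendsto 0).eventually_lt_const
      (by simpa [z] using c.norm_x₀_lt_one))
  have hsin : ∀ᶠ θ in 𝓝[>] (0 : ℝ), 0 < Real.sin θ := by
    filter_upwards [Ioo_mem_nhdsGT Real.pi_pos] with θ hθ using Real.sin_pos_of_mem_Ioo hθ
  convert S.mem_inducedSet_of_tendsto hlim ?_ using 2
  · simp
  · filter_upwards [hz, hsin] with θ hzθ hsinθ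
    refine S.mem_inducedSet_of_forall_eq
      ((WeakDual.eval_continuous (z θ)).comp continuous_subtype_val) fun φ hφ => Subtype.ext ?_
    exact c.eq_of_apply_eq_one φ.2 (Real.cos_sq_add_sin_sq θ) hsinθ.ne' hzθ (hφ.trans (harc_z θ))

theorem not_hasRetractionalSkeleton [LinearOrder ι] [Nonempty ι]
    [CountableInterFilter (atTop : Filter ι)] (c : RenormingSystem X ι M) :
    ¬ HasRetractionalSkeleton (dualBallWrt c.N) := by
  rintro ⟨S⟩
  have hval (x : X) : Continuous fun φ : dualBallWrt c.N => φ.1 x :=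
    (WeakDual.eval_continuous x).comp continuous_subtype_val
  let e (i : ι) : dualBallWrt c.N := ⟨c.a + c.y i, c.a_add_y_mem_dualBallWrt_N i⟩
  have he : Tendsto e atTop (𝓝 ⟨c.a, c.a_mem_dualBallWrt_N⟩) :=
    tendsto_subtype_rng.2 (by simpa using tendsto_const_nhds.add c.tendsto_y)
  let A (l : ι) : Set (dualBallWrt c.N) := {φ | 1 / (8 * c.C) ≤ φ.1 (c.w l) - c.a (c.w l)}
  have hA (l : ι) : IsClosed (A l) :=
    isClosed_le continuous_const ((hval _).sub continuous_const)
  have ha : ⟨c.a, c.a_mem_dualBallWrt_N⟩ ∈ {φ | ∀ᶠ l in atTop, φ ∈ A l} := by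
    refine S.mem_of_tendsto_of_forall_countable_closure_subset (c.a_mem_inducedSet S) he
      (fun T hTA hT => closure_subset_setOf_eventually_mem hA hT hTA)
      (fun i => (hval c.x₀).prodMk (hval (c.w i))) fun i φ hφ => ?_
    obtain ⟨hφ_face, hφ_w⟩ := Prod.ext_iff.1 hφ
    refine c.eventually_le_sub_apply_w φ.2 (α₀ := i) (hφ_face.trans ?_) ?_
    · change c.a c.x₀ + c.y i c.x₀ = 1
      rw [c.a_x₀, c.y_x₀, add_zero]
    · rw [show φ.1 (c.w i) = c.a (c.w i) + c.y i (c.w i) from hφ_w, add_sub_cancel_left]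
      exact c.half_le_y_w i i le_rfl
  obtain ⟨l, hl⟩ := Eventually.exists (f := atTop) ha
  have hC : 0 < c.C := c.C_pos
  have hle : 1 / (8 * c.C) ≤ 0 := by simpa [A] using hl
  exact hle.not_gt (by positivity)

end Skeleton

end RenormingSystem

/-! ### Construction of a renorming system -/

section Existence

variable {X : Type u} [NormedAddCommGroup X] [NormedSpace ℝ X]

lemma exists_apply_eq_one_of_norm_lt_one [Nontrivial X] {A : ℝ} (hA : 1 < A) :
    ∃ (a : WeakDual ℝ X) (x : X), ‖x‖ < 1 ∧ a x = 1 ∧ ∀ v, |a v| ≤ A * ‖v‖ := by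
  obtain ⟨v, hv⟩ := exists_ne (0 : X)
  have hv_norm : 0 < ‖v‖ := norm_pos_iff.2 hv
  have hA_pos : 0 < A := one_pos.trans hA
  obtain ⟨g, hg, hgv⟩ := exists_dual_vector ℝ v hv_norm.ne'
  refine ⟨A • StrongDual.toWeakDual g, (A * ‖v‖)⁻¹ • v, ?_, ?_, fun x => ?_⟩
  · rw [norm_smul, norm_inv, norm_mul, norm_norm, Real.norm_of_nonneg hA_pos.le, mul_inv, mul_assoc,
      inv_mul_cancel₀ hv_norm.ne', mul_one]
    exact inv_lt_one_of_one_lt₀ hA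
  · change A * g ((A * ‖v‖)⁻¹ • v) = 1
    rw [map_smul, hgv, smul_eq_mul, RCLike.ofReal_real_eq_id, id]
    field_simp
  · change |A * g x| ≤ A * ‖x‖
    rw [abs_mul, abs_of_pos hA_pos]
    gcongr
    simpa [hg] using g.le_opNorm x

lemma exists_apply_eq_zero_and_apply_eq_one {a b : WeakDual ℝ X} {x₀ : X} (ha : a x₀ = 1)
    (hbx₀ : b x₀ = 0) (hb : b ≠ 0) : ∃ x₁, a x₁ = 0 ∧ b x₁ = 1 := by
  obtain ⟨v, hv : b v ≠ 0⟩ := DFunLike.ne_iff.1 hb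
  refine ⟨(b v)⁻¹ • (v - a v • x₀), ?_, ?_⟩
  · simp [ha]
  · simp [hbx₀, hv]

theorem nonempty_renormingSystem {ι : Type*} [LinearOrder ι] [NoMaxOrder ι] [Nonempty ι]
    [TopologicalSpace ι] [OrderTopology ι]
    (hsup : ∀ s : ℕ → ι, ∃ L, IsLUB (Set.range s) L) {z : ι → WeakDual ℝ X} (hz : Continuous z)
    (hz_ne : ∀ i, z i ≠ 0) (hz_lim : Tendsto z atTop (𝓝 0)) {A σ : ℝ} (hA : 1 < A)
    (hσ : ∀ i x, |z i x| ≤ σ * ‖x‖) : Nonempty (RenormingSystem X ι (A + σ)) := by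
  have : CountableInterFilter (atTop : Filter ι) :=
    countableInterFilter_atTop_of_bddAbove fun s => (hsup s).imp fun _ hL => hL.1
  have hz_zero (x : X) : ∀ᶠ i in atTop, z i x = 0 :=
    eventually_eq_of_tendsto (((WeakDual.eval_continuous x).tendsto 0).comp hz_lim)
  obtain ⟨v, hv : z (Classical.arbitrary ι) v ≠ 0⟩ :=
    DFunLike.ne_iff.1 (hz_ne (Classical.arbitrary ι))
  have : Nontrivial X := ⟨v, 0, fun h => hv (by rw [h, map_zero])⟩
  have hσ_pos : 0 < σ :=
    pos_of_mul_pos_left ((abs_pos.2 hv).trans_le (hσ _ v)) (norm_nonneg v)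
  obtain ⟨a, x₀, hx₀, hax₀, ha⟩ := exists_apply_eq_one_of_norm_lt_one (X := X) hA
  obtain ⟨β, hβ⟩ := (hz_zero x₀).exists
  obtain ⟨x₁, hax₁, hbx₁⟩ := exists_apply_eq_zero_and_apply_eq_one hax₀ hβ (hz_ne β)
  obtain ⟨ζ, n, hpos⟩ := exists_forall_half_le_apply hsup hz hz_ne
  choose x hx_norm hx using hpos
  obtain ⟨θ, hθ⟩ := eventually_atTop.1
    ((hz_zero x₀).and ((hz_zero x₁).and (eventually_gt_atTop ζ)))
  have hθ_max (i : ι) := hθ (max i θ) (le_max_right i θ)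
  exact ⟨{
    a, b := z β, x₀, x₁, y i := z (max i θ), w l := x (max l θ), C := σ * n
    a_x₀ := hax₀
    a_x₁ := hax₁
    b_x₀ := hβ
    b_x₁ := hbx₁
    y_x₀ i := (hθ_max i).1
    y_x₁ i := (hθ_max i).2.1
    norm_x₀_lt_one := hx₀
    tendsto_y := hz_lim.comp (tendsto_atTop_mono (fun i => le_max_left i θ) tendsto_id)
    half_le_y_w l α hα := hx _ _ ⟨(hθ_max α).2.2, max_le_max_right θ hα⟩
    abs_y_w_le l α := (hσ _ _).trans (by gcongr; exact hx_norm _)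
    abs_a_add_abs_b_le v := (add_le_add (ha v) (hσ β v)).trans_eq (add_mul A σ ‖v‖).symm
    abs_a_add_abs_y_le i v := (add_le_add (ha v) (hσ _ v)).trans_eq (add_mul A σ ‖v‖).symm }⟩

end Existence

/-! ### Countable ordinals -/

section CountableOrdinals

lemma omega1_eq_omega_one : omega1 = Ordinal.omega 1 := by simp [omega1]

lemma isSuccLimit_omega1 : Order.IsSuccLimit omega1 :=
  Cardinal.isSuccLimit_ord (Cardinal.aleph0_le_aleph 1)

instance nonempty_Iio_omega1 : Nonempty (Set.Iio omega1) :=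
  isSuccLimit_omega1.nonempty_Iio.to_subtype

instance noMaxOrder_Iio_omega1 : NoMaxOrder (Set.Iio omega1) :=
  isSuccLimit_omega1.isSuccPrelimit.noMaxOrder_Iio

lemma exists_isLUB_range_Iio_omega1 (s : ℕ → Set.Iio omega1) : ∃ L, IsLUB (Set.range s) L := by
  have hlt : ⨆ n, (s n).1 < omega1 :=
    (Ordinal.iSup_lt_omega_one fun n => (s n).2.trans_eq omega1_eq_omega_one).trans_eq
      omega1_eq_omega_one.symm
  refine ⟨⟨⨆ n, (s n).1, hlt⟩, ?_, fun L hL => ?_⟩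
  · rintro _ ⟨n, rfl⟩
    exact le_ciSup (f := fun n => (s n).1) Ordinal.bddAbove_of_small n
  · exact ciSup_le' fun n => Subtype.coe_le_coe.2 (hL ⟨n, rfl⟩)

instance countableInterFilter_atTop_Iio_omega1 :
    CountableInterFilter (atTop : Filter (Set.Iio omega1)) :=
  countableInterFilter_atTop_of_bddAbove fun s =>
    (exists_isLUB_range_Iio_omega1 s).imp fun _ hL => hL.1

lemma tendsto_inclusion_Iio_Iic_omega1 :
    Tendsto (Set.inclusion (Set.Iio_subset_Iic_self : Set.Iio omega1 ⊆ Set.Iic omega1)) atTop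
      (𝓝 ⊤) := by
  refine tendsto_atTop_isLUB (fun _ _ h => h) ⟨fun _ _ => le_top, fun b hb => ?_⟩
  refine isSuccLimit_omega1.le_iff_forall_le.2 fun α hα => hb ⟨⟨α, hα⟩, rfl⟩

lemma exists_chain_tendsto_zero {X : Type u} [NormedAddCommGroup X] [NormedSpace ℝ X]
    {f : OrdinalSegmentOmega1 → dualBall X} (hf : Continuous f) (hne : ∀ α, α ≠ ⊤ → f α ≠ f ⊤)
    {σ : ℝ} (hσ : 0 < σ) :
    ∃ z : Set.Iio omega1 → WeakDual ℝ X, Continuous z ∧ (∀ i, z i ≠ 0) ∧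
      Tendsto z atTop (𝓝 0) ∧ ∀ i x, |z i x| ≤ σ * ‖x‖ := by
  let incl : Set.Iio omega1 → OrdinalSegmentOmega1 := Set.inclusion Set.Iio_subset_Iic_self
  have hf' : Continuous fun α => (f α).1 := continuous_subtype_val.comp hf
  refine ⟨fun i => (σ / 2) • ((f (incl i)).1 - (f ⊤).1), ?_, fun i => ?_, ?_, fun i x => ?_⟩
  · exact ((hf'.comp (continuous_inclusion Set.Iio_subset_Iic_self)).sub
      continuous_const).const_smul (σ / 2)
  · refine smul_ne_zero (by positivity) (sub_ne_zero.2 fun h => hne (incl i) ?_ (Subtype.ext h))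
    exact fun h => (Set.mem_Iio.1 i.2).ne (congrArg Subtype.val h)
  · simpa using ((((hf'.tendsto ⊤).comp tendsto_inclusion_Iio_Iic_omega1).sub_const
      (f ⊤).1).const_smul (σ / 2))
  · change |σ / 2 * ((f (incl i)).1 x - (f ⊤).1 x)| ≤ σ * ‖x‖
    rw [abs_mul, abs_of_pos (half_pos hσ)]
    calc σ / 2 * |(f (incl i)).1 x - (f ⊤).1 x| ≤ σ / 2 * (‖x‖ + ‖x‖) := by
          gcongr
          exact (abs_sub _ _).trans (add_le_add ((f (incl i)).2 x) ((f ⊤).2 x))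
      _ = σ * ‖x‖ := by ring

end CountableOrdinals

theorem exists_equivalent_norm_dualBall_without_retractionalSkeleton_general (X : Type u)
    [NormedAddCommGroup X] [NormedSpace ℝ X] {f : OrdinalSegmentOmega1 → dualBall X}
    (hf : Continuous f) (hne : ∀ α, α ≠ ⊤ → f α ≠ f ⊤) {ε : ℝ} (hε : ε ∈ Set.Ioo (0 : ℝ) 1) :
    ∃ N : X → ℝ, IsEquivNorm N ∧
      (∀ x : X, (1 - ε) * N x ≤ ‖x‖ ∧ ‖x‖ ≤ N x) ∧
      ¬ HasRetractionalSkeleton (dualBallWrt N) := by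
  have hε_pos : 0 < 1 - ε := sub_pos.2 hε.2
  obtain ⟨σ, hσ⟩ : ∃ σ, (1 + σ) + σ = (1 - ε)⁻¹ := ⟨((1 - ε)⁻¹ - 1) / 2, by ring⟩
  have hσ_pos : 0 < σ := by linarith [(one_lt_inv₀ hε_pos).2 (sub_lt_self 1 hε.1)]
  obtain ⟨z, hz, hz_ne, hz_lim, hz_le⟩ := exists_chain_tendsto_zero hf hne hσ_pos
  obtain ⟨c⟩ := nonempty_renormingSystem exists_isLUB_range_Iio_omega1 hz hz_ne hz_lim
    (lt_add_of_pos_right 1 hσ_pos) hz_le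
  refine ⟨c.N, c.isEquivNorm_N, fun x => ⟨?_, c.norm_le_N x⟩, c.not_hasRetractionalSkeleton⟩
  calc (1 - ε) * c.N x ≤ (1 - ε) * ((1 - ε)⁻¹ * ‖x‖) := by
        gcongr
        exact hσ ▸ c.N_le_mul_norm x
    _ = ‖x‖ := mul_inv_cancel_left₀ hε_pos.ne' _

/-- If `[0, ω₁]` embeds homeomorphically into `(B_{X*}, w*)`, then for every `ε ∈ (0, 1)`
there is an equivalent norm `N` on `X` with `(1 - ε) * N ≤ ‖·‖ ≤ N` whose dual unit ball,
with the weak* topology, has no retractional skeleton. -/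
theorem exists_equivalent_norm_dualBall_without_retractionalSkeleton (X : Type u)
    [NormedAddCommGroup X] [NormedSpace ℝ X] [CompleteSpace X]
    (hemb : ∃ f : OrdinalSegmentOmega1 → ↥(dualBall X), Topology.IsEmbedding f)
    (ε : ℝ) (hε : ε ∈ Set.Ioo (0 : ℝ) 1) :
    ∃ N : X → ℝ, IsEquivNorm N ∧
      (∀ x : X, (1 - ε) * N x ≤ ‖x‖ ∧ ‖x‖ ≤ N x) ∧
      ¬ HasRetractionalSkeleton ↥(dualBallWrt N) := by
  obtain ⟨f, hf⟩ := hemb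
  exact exists_equivalent_norm_dualBall_without_retractionalSkeleton_general X hf.continuous
    (fun _ => hf.injective.ne) hε
end
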